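/- Define g : ℝ → ℝ by g(s) = (1/2)(e^{−s} cos(s − π/4) − e^{s} cos(s + π/4)). Let 0 < a < b and t₀ > 0. Then there exists C₀ > 0 such that ∫_{at}^{bt} g(s)² ds ≥ C₀ for all t ≥ t₀. -/

import Mathlib

/-- `g(s) = (1/2)(e^{−s} cos(s − π/4) − e^{s} cos(s + π/4))`. -/
noncomputable def gfun (s : ℝ) : ℝ :=
  (1 / 2) * (Real.exp (-s) * Real.cos (s - Real.pi / 4) -
    Real.exp s * Real.cos (s + Real.pi / 4))

theorem gfun_cont : Continuous gfun := by
  unfold gfun; fun_prop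

theorem gfun_sq_ii (x y : ℝ) :
    IntervalIntegrable (fun s => (gfun s) ^ 2) MeasureTheory.volume x y :=
  (gfun_cont.pow 2).intervalIntegrable x y

theorem gfun_eq (s : ℝ) : gfun s =
    (Real.sqrt 2 / 4) * (Real.exp (-s) * (Real.cos s + Real.sin s)
      - Real.exp s * (Real.cos s - Real.sin s)) := by
  unfold gfun
  rw [Real.cos_sub, Real.cos_add, Real.cos_pi_div_four, Real.sin_pi_div_four]
  ring

theorem gfun_deriv (s : ℝ) : HasDerivAt gfun
    ((Real.sqrt 2 / 2) * (Real.sin s * (Real.exp s - Real.exp (-s)))) s := by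
  have e : gfun = fun s => (Real.sqrt 2 / 4) * (Real.exp (-s) * (Real.cos s + Real.sin s)
      - Real.exp s * (Real.cos s - Real.sin s)) := funext gfun_eq
  rw [e]
  have h1 : HasDerivAt (fun s : ℝ => Real.exp (-s)) (Real.exp (-s) * (-1)) s :=
    (hasDerivAt_neg s).exp
  have h2 := Real.hasDerivAt_cos s
  have h3 := Real.hasDerivAt_sin s
  have h4 := Real.hasDerivAt_exp s
  have := ((h1.mul (h2.add h3)).sub (h4.mul (h2.sub h3))).const_mul (Real.sqrt 2 / 4)
  refine this.congr_deriv ?_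
  simp only [Pi.add_apply, Pi.sub_apply]
  ring

theorem gfun_ne (x L : ℝ) (hx : 0 < x) (hL : 0 < L) :
    ∃ c ∈ Set.Icc x (x + L), gfun c ≠ 0 := by
  by_contra! h
  have hs2 : Real.sqrt 2 ≠ 0 := by positivity
  set m := x + L / 2 with hm
  have hmem : Set.Icc x (x + L) ∈ nhds m := Icc_mem_nhds (by linarith) (by linarith)
  have hd : HasDerivAt gfun 0 m := by
    refine (hasDerivAt_const m (0:ℝ)).congr_of_eventuallyEq ?_
    filter_upwards [hmem] with y hy using h y hy
  have h0 := (gfun_deriv m).unique hd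
  have hexp : Real.exp (-m) < Real.exp m := Real.exp_lt_exp.2 (by linarith)
  have hsin : Real.sin m = 0 := by
    rcases mul_eq_zero.1 h0 with h1 | h1
    · exact absurd h1 (by positivity)
    · rcases mul_eq_zero.1 h1 with h2 | h2
      · exact h2
      · linarith
  have hg := h m (mem_of_mem_nhds hmem)
  rw [gfun_eq, hsin] at hg
  have hcos : Real.cos m = 0 := by
    rcases mul_eq_zero.1 hg with h1 | h1
    · exact absurd h1 (by positivity)
    · have h3 : (Real.exp (-m) - Real.exp m) * Real.cos m = 0 := by linarith
      rcases mul_eq_zero.1 h3 with h2 | h2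
      · linarith
      · exact h2
  have := Real.sin_sq_add_cos_sq m
  rw [hsin, hcos] at this
  norm_num at this

theorem gfun_int_pos (x L : ℝ) (hx : 0 < x) (hL : 0 < L) :
    0 < ∫ s in x..(x + L), (gfun s) ^ 2 := by
  obtain ⟨c, hc, hne⟩ := gfun_ne x L hx hL
  exact intervalIntegral.integral_pos (by linarith) (gfun_cont.pow 2).continuousOn
    (fun _ _ => sq_nonneg _) ⟨c, hc, by positivity⟩

theorem gfun_sq_lower (x s : ℝ) (hx : 0 < x) (hs : x ≤ s) :
    Real.exp (2 * x) / 8 * Real.cos (s + Real.pi / 4) ^ 2 - 1 / 4 ≤ gfun s ^ 2 := by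
  unfold gfun
  set P := Real.exp (-s) * Real.cos (s - Real.pi / 4) with hP
  set Q := Real.exp s * Real.cos (s + Real.pi / 4) with hQ
  have hP1 : P ^ 2 ≤ 1 := by
    rw [hP, mul_pow]
    have h1 : Real.exp (-s) ≤ 1 := Real.exp_le_one_iff.2 (by linarith)
    exact mul_le_one₀ (pow_le_one₀ (Real.exp_pos _).le h1) (sq_nonneg _) (Real.cos_sq_le_one _)
  have hQ1 : Real.exp (2 * x) * Real.cos (s + Real.pi / 4) ^ 2 ≤ Q ^ 2 := by
    rw [hQ, mul_pow, ← Real.exp_nat_mul]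
    gcongr
    push_cast; linarith
  nlinarith [sq_nonneg (2 * P - Q)]

theorem cos_int (x L : ℝ) (hL : 0 < L) (hL1 : L ≤ 1) :
    (L - Real.sin L) / 2 ≤ ∫ s in x..(x + L), Real.cos (s + Real.pi / 4) ^ 2 := by
  rw [intervalIntegral.integral_comp_add_right (fun s => Real.cos s ^ 2), integral_cos_sq]
  have hs : 0 < Real.sin L := Real.sin_pos_of_pos_of_lt_pi hL (by linarith [Real.pi_gt_three])
  have e : x + L + Real.pi / 4 = x + Real.pi / 4 + L := by ring
  rw [e]
  generalize x + Real.pi / 4 = y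
  have key : Real.cos (y + L) * Real.sin (y + L) - Real.cos y * Real.sin y
      = Real.sin L * Real.cos (2 * y + L) := by
    have h1 := Real.sin_sq_add_cos_sq y
    have h2 := Real.sin_sq_add_cos_sq L
    rw [Real.cos_add, Real.sin_add, Real.cos_add, Real.cos_two_mul, Real.sin_two_mul]
    linear_combination (Real.cos y * Real.sin y) * h2 - Real.sin L * Real.cos L * h1
  have := Real.neg_one_le_cos (2 * y + L)
  nlinarith

theorem stmt_large (x L : ℝ) (hx : 0 < x) (hL : 0 < L) (hL1 : L ≤ 1)
    (hM : 10 / (L - Real.sin L) ≤ x) : 1 ≤ ∫ s in x..(x + L), (gfun s) ^ 2 := by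
  have hd : 0 < L - Real.sin L := sub_pos.2 (Real.sin_lt hL)
  have h1 : ∫ s in x..(x + L), (Real.exp (2 * x) / 8 * Real.cos (s + Real.pi / 4) ^ 2 - 1 / 4)
      ≤ ∫ s in x..(x + L), (gfun s) ^ 2 := by
    apply intervalIntegral.integral_mono_on (by linarith) _ (gfun_sq_ii _ _)
    · intro s hs
      exact gfun_sq_lower x s hx hs.1
    · exact Continuous.intervalIntegrable (by fun_prop) _ _
  rw [intervalIntegral.integral_sub (Continuous.intervalIntegrable (by fun_prop) _ _)
    (Continuous.intervalIntegrable (by fun_prop) _ _), intervalIntegral.integral_const_mul,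
    intervalIntegral.integral_const] at h1
  have h2 := cos_int x L hL hL1
  have h3 := Real.add_one_le_exp (2 * x)
  have h4 : 10 ≤ x * (L - Real.sin L) := (div_le_iff₀ hd).1 hM
  have h5 : (2 * x) / 8 * ((L - Real.sin L) / 2) ≤ Real.exp (2 * x) / 8 *
      ∫ s in x..(x + L), Real.cos (s + Real.pi / 4) ^ 2 := by
    apply mul_le_mul _ h2 (by positivity) (by positivity)
    linarith
  have h6 : (x + L - x) • (1 / 4 : ℝ) = L / 4 := by rw [smul_eq_mul]; ring
  rw [h6] at h1
  -- 10/8 - 1/4 = 1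
  linarith

/-- For `0 < a < b` and `t₀ > 0`, the integrals `∫_{at}^{bt} g(s)² ds` are uniformly bounded
below by a positive constant for `t ≥ t₀`. -/
theorem stmt15 (a b t₀ : ℝ) (ha : 0 < a) (hab : a < b) (ht₀ : 0 < t₀) :
    ∃ C₀ > 0, ∀ t : ℝ, t₀ ≤ t → C₀ ≤ ∫ s in (a * t)..(b * t), (gfun s) ^ 2 := by
  set L := min ((b - a) * t₀) 1 with hLdef
  have hL : 0 < L := lt_min (mul_pos (by linarith) ht₀) one_pos
  have hL1 : L ≤ 1 := min_le_right _ _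
  have hLb : L ≤ (b - a) * t₀ := min_le_left _ _
  set M := max (a * t₀) (10 / (L - Real.sin L)) with hMdef
  have hat : 0 < a * t₀ := mul_pos ha ht₀
  have hcont : Continuous (fun x => ∫ s in x..(x + L), (gfun s) ^ 2) := by
    have hp : Continuous (fun x => ∫ s in (0:ℝ)..x, (gfun s) ^ 2) :=
      intervalIntegral.continuous_primitive (fun u v => gfun_sq_ii u v) 0
    have e : (fun x => ∫ s in x..(x + L), (gfun s) ^ 2) =
        fun x => (∫ s in (0:ℝ)..(x + L), (gfun s) ^ 2) - ∫ s in (0:ℝ)..x, (gfun s) ^ 2 := by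
      funext x
      rw [intervalIntegral.integral_interval_sub_left (gfun_sq_ii _ _) (gfun_sq_ii _ _)]
    rw [e]
    exact (hp.comp (continuous_id.add continuous_const)).sub hp
  obtain ⟨x₀, hx₀, hmin⟩ := isCompact_Icc.exists_isMinOn
    (Set.nonempty_Icc.2 (le_max_left (a * t₀) (10 / (L - Real.sin L)))) hcont.continuousOn
  refine ⟨min (∫ s in x₀..(x₀ + L), (gfun s) ^ 2) 1,
    lt_min (gfun_int_pos x₀ L (hat.trans_le hx₀.1) hL) one_pos, fun t ht => ?_⟩
  have hx : a * t₀ ≤ a * t := by gcongr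
  have hxL : a * t + L ≤ b * t := by nlinarith
  have hstep : ∫ s in (a * t)..(a * t + L), (gfun s) ^ 2 ≤
      ∫ s in (a * t)..(b * t), (gfun s) ^ 2 := by
    apply intervalIntegral.integral_mono_interval le_rfl (by linarith) hxL
    · exact Filter.Eventually.of_forall fun _ => sq_nonneg _
    · exact gfun_sq_ii _ _
  refine le_trans ?_ hstep
  rcases le_total (a * t) M with h | h
  · exact (min_le_left _ _).trans (hmin ⟨hx, h⟩)
  · exact (min_le_right _ _).trans
      (stmt_large _ L (hat.trans_le hx) hL hL1 ((le_max_right _ _).trans h))
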